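/- Let d, w, T be positive integers with w ≤ T, let U be a type, let h : Fin d → U → Fin w be a family of hash functions, let ε ∈ (0,1) and δ ∈ (0,1). Set K = ⌈T/w⌉ and L = ⌈log₂(K+1)⌉. For a stream x : Fin T → U, for i ∈ Fin d, j ∈ Fin w and k ∈ ℕ with 1 ≤ k ≤ K, define the epoch count c_{i,j,k}(x) = #{t < T : (k−1)·w + (j+1) ≤ t < k·w + (j+1) and h i (x t) = j}, and for 0 ≤ l ≤ L, k' ∈ ℕ with k'·2^l < K define the tree node count G(x)(i,j,l,k') = ∑_{k : k'·2^l < k ≤ (k'+1)·2^l, k ≤ K} c_{i,j,k}(x), indexed by the finite set 𝒩 = {(i,j,l,k')}. Let σ = (1/ε)·√(2·(L+1)·2d·ln(1.25/δ)) and let μ_x be the product measure on ℝ^𝒩 whose factor at (i,j,l,k') is the Gaussian distribution N(G(x)(i,j,l,k'), σ²). Then for any two streams x, x' : Fin T → U that agree at every index except one, and for every measurable set Z ⊆ ℝ^𝒩: μ_x(Z) ≤ e^ε · μ_{x'}(Z) + δ. -/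

import Mathlib

/-!
A single arrival is counted by at most one tree node for each of the `d` rows and each of the
`L + 1` levels. Replacing one element of the stream therefore changes the vector of node counts by
a difference of two `0/1` vectors with at most `d (L + 1)` ones each, so the squared
`ℓ²`-sensitivity is at most `S = 2 d (L + 1)` (`lazyNodeCount_sensitivity`).

It remains to analyse the Gaussian mechanism (`gaussian_mechanism`). The log-likelihood ratio of the
two product Gaussians is affine in the output; under the first measure it is Gaussian with mean
`s² / 2` and variance `s²`, where `s ≤ ε / c` and `c² = 2 log (1.25 / δ)`. Hence it exceeds `ε` with
probability at most `P (N > c - 1 / (2 c))`, which is at most `δ = 1.25 exp (-c² / 2)`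
(`gaussianReal_tail_le`). Outside this event the density ratio is at most `exp ε`.
-/

open MeasureTheory ProbabilityTheory

/-- The `k`-th epoch count of cell `(i,j)` of the Lazy Sketch on stream `x`. -/
def epochCount (d w T : ℕ) {U : Type*} (h : Fin d → U → Fin w)
    (x : Fin T → U) (i : Fin d) (j : Fin w) (k : ℕ) : ℕ :=
  (Finset.univ.filter (fun t : Fin T =>
      (k - 1) * w + ((j : ℕ) + 1) ≤ (t : ℕ) ∧
      (t : ℕ) < k * w + ((j : ℕ) + 1) ∧
      h i (x t) = j)).card

/-- The finite index set of the Lazy Sketch's tree nodes `(i, j, l, k')` with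
`0 ≤ l ≤ L` and `k'·2^l < K`.  (Since `2^l ≥ 1`, such `k'` satisfies `k' < K`.) -/
def LazyNodeIndex (d w L K : ℕ) : Type :=
  {p : Fin d × Fin w × Fin (L + 1) × Fin K //
    ((p.2.2.2 : ℕ)) * 2 ^ ((p.2.2.1 : ℕ)) < K}

instance (d w L K : ℕ) : Fintype (LazyNodeIndex d w L K) := by
  unfold LazyNodeIndex; infer_instance

/-- The exact count at tree node `(i, j, l, k')` of the binary mechanism
maintained for output cell `(i,j)`: the sum of the epoch counts `c_{i,j,k}`
over epochs `k` with `k'·2^l < k ≤ (k'+1)·2^l` and `k ≤ K`. -/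
def lazyNodeCount (d w T L K : ℕ) {U : Type*} (h : Fin d → U → Fin w)
    (x : Fin T → U) (p : LazyNodeIndex d w L K) : ℝ :=
  ∑ k ∈ (Finset.Icc (((p.1.2.2.2 : ℕ)) * 2 ^ ((p.1.2.2.1 : ℕ)) + 1)
      ((((p.1.2.2.2 : ℕ)) + 1) * 2 ^ ((p.1.2.2.1 : ℕ)))).filter (· ≤ K),
    (epochCount d w T h x p.1.1 p.1.2.1 k : ℝ)

/-! ### Gaussian tails -/

theorem gaussianReal_Ioi_zero : gaussianReal 0 1 (Set.Ioi 0) = ENNReal.ofReal (1 / 2) := by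
  have hneg : gaussianReal 0 1 (Set.Ioi 0) = gaussianReal 0 1 (Set.Iio 0) := by
    have h := gaussianReal_map_neg (μ := 0) (v := 1)
    rw [neg_zero] at h
    conv_lhs => rw [← h]
    rw [Measure.map_apply (by fun_prop) measurableSet_Ioi]
    congr 1
    ext x
    simp
  have := nullSingletonClass_gaussianReal (μ := 0) (v := 1) one_ne_zero
  have hsum : gaussianReal 0 1 (Set.Iic 0) + gaussianReal 0 1 (Set.Ioi 0) = 1 := by
    rw [← measure_union (Set.Iic_disjoint_Ioi le_rfl) measurableSet_Ioi, Set.Iic_union_Ioi,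
      measure_univ]
  rw [← measure_congr (Iio_ae_eq_Iic (μ := gaussianReal 0 1) (a := (0 : ℝ))), ← hneg] at hsum
  set m := gaussianReal 0 1 (Set.Ioi 0) with hm
  have hmt : m ≠ ⊤ := measure_ne_top _ _
  have hr : m.toReal + m.toReal = 1 := by
    rw [← ENNReal.toReal_add hmt hmt, hsum, ENNReal.toReal_one]
  rw [← ENNReal.ofReal_toReal hmt]
  congr 1
  linarith

/-- Gaussian tail bound with the factor `1 / 2`, obtained by translating the half-line to `(0, ∞)`,
where the density of `N(-a, 1)` is at most `exp (-a² / 2)` times that of `N(0, 1)`. -/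
theorem gaussianReal_Ioi_le_half_exp {a : ℝ} (ha : 0 ≤ a) :
    gaussianReal 0 1 (Set.Ioi a) ≤ ENNReal.ofReal (1 / 2 * Real.exp (-a ^ 2 / 2)) := by
  have hshift : gaussianReal 0 1 (Set.Ioi a) = gaussianReal (-a) 1 (Set.Ioi 0) := by
    have h := gaussianReal_map_sub_const (μ := 0) (v := 1) a
    rw [zero_sub] at h
    rw [← h, Measure.map_apply (by fun_prop) measurableSet_Ioi]
    congr 1
    ext x
    simp
  rw [hshift, mul_comm, ENNReal.ofReal_mul (Real.exp_pos _).le, ← gaussianReal_Ioi_zero,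
    gaussianReal_apply _ one_ne_zero, gaussianReal_apply _ one_ne_zero,
    ← lintegral_const_mul _ (by fun_prop)]
  refine setLIntegral_mono' measurableSet_Ioi fun y hy => ?_
  rw [gaussianPDF, gaussianPDF, ← ENNReal.ofReal_mul (Real.exp_pos _).le]
  refine ENNReal.ofReal_le_ofReal ?_
  rw [gaussianPDFReal, gaussianPDFReal, mul_left_comm, ← Real.exp_add]
  gcongr
  have : 0 ≤ a * y := mul_nonneg ha (le_of_lt hy)
  simp only [NNReal.coe_one]
  linarith

/-- The density of `N(0, 1)` is at most `1`, so `(a, 0]` has mass at most `-a`. -/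
theorem gaussianReal_Ioi_le_of_nonpos {a : ℝ} (ha : a ≤ 0) :
    gaussianReal 0 1 (Set.Ioi a) ≤ ENNReal.ofReal (1 / 2 - a) := by
  rw [← Set.Ioc_union_Ioi_eq_Ioi ha]
  refine (measure_union_le _ _).trans ?_
  rw [gaussianReal_Ioi_zero, sub_eq_neg_add, ENNReal.ofReal_add (by linarith) (by norm_num)]
  gcongr
  rw [gaussianReal_apply _ one_ne_zero]
  calc ∫⁻ y in Set.Ioc a 0, gaussianPDF 0 1 y ≤ ∫⁻ y in Set.Ioc a 0, 1 := by
        refine lintegral_mono fun y => ?_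
        rw [gaussianPDF, ENNReal.ofReal_le_one, gaussianPDFReal]
        have h1 : (1 : ℝ) ≤ √(2 * Real.pi * (1 : NNReal)) := by
          rw [Real.one_le_sqrt, NNReal.coe_one]
          linarith [Real.pi_gt_three]
        have h2 : Real.exp (-(y - 0) ^ 2 / (2 * (1 : NNReal))) ≤ 1 := by
          rw [Real.exp_le_one_iff, neg_div]
          exact neg_nonpos.2 (by positivity)
        exact mul_le_one₀ (inv_le_one_of_one_le₀ h1) (Real.exp_pos _).le h2
    _ = ENNReal.ofReal (-a) := by simp

/-- The tail estimate behind the constant `1.25`. For a nonnegative threshold it reduces to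
`exp (1 / 2) / 2 ≤ 1.25`; for a negative one, `c² ≤ 1 / 2`, which makes `δ` close to `1` while the
threshold stays close to `0`. -/
theorem gaussianReal_tail_le {c δ : ℝ} (hδ : δ ∈ Set.Ioo (0 : ℝ) 1) (hc : 0 < c)
    (hcδ : c ^ 2 = 2 * Real.log (1.25 / δ)) :
    gaussianReal 0 1 (Set.Ioi (c - 1 / (2 * c))) ≤ ENNReal.ofReal δ := by
  obtain ⟨hδ0, hδ1⟩ := hδ
  have hδe : δ = 1.25 * Real.exp (-c ^ 2 / 2) := by
    rw [hcδ, show -(2 * Real.log (1.25 / δ)) / 2 = -Real.log (1.25 / δ) by ring, Real.exp_neg,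
      Real.exp_log (by positivity)]
    field_simp
  have hsq : (c - 1 / (2 * c)) ^ 2 = c ^ 2 - 1 + 1 / (4 * c ^ 2) := by
    field_simp
    ring
  rcases le_total 0 (c - 1 / (2 * c)) with ha | ha
  · refine (gaussianReal_Ioi_le_half_exp ha).trans (ENNReal.ofReal_le_ofReal ?_)
    have h1 : Real.exp (-(c - 1 / (2 * c)) ^ 2 / 2) ≤ Real.exp (1 / 2) * Real.exp (-c ^ 2 / 2) := by
      rw [← Real.exp_add]
      gcongr
      have : 0 ≤ 1 / (4 * c ^ 2) := by positivity
      linarith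
    have h2 : Real.exp (1 / 2) ≤ 2 := by
      have h3 : Real.exp (1 / 2) ^ 2 = Real.exp 1 := by
        rw [← Real.exp_nat_mul]
        norm_num
      have := Real.exp_one_lt_d9
      nlinarith [Real.exp_pos (1 / 2)]
    rw [hδe]
    nlinarith [Real.exp_pos (-c ^ 2 / 2)]
  · refine (gaussianReal_Ioi_le_of_nonpos ha).trans (ENNReal.ofReal_le_ofReal ?_)
    -- `δ < 1` gives `c² > 2 log 1.25`.
    have hlow : (2 / 5 : ℝ) ≤ c ^ 2 := by
      have h1 := Real.one_sub_inv_le_log_of_pos (x := 1.25 / δ) (by positivity)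
      have h2 : (1.25 / δ)⁻¹ ≤ 4 / 5 := by
        rw [inv_div, div_le_iff₀ (by norm_num)]
        linarith
      linarith
    have hup : c ^ 2 ≤ 1 / 2 := by
      have h1 : c ≤ 1 / (2 * c) := by linarith
      rw [le_div_iff₀ (by positivity)] at h1
      nlinarith
    have hc1 : (3 / 5 : ℝ) ≤ c := by nlinarith
    have h1 : 1 / (2 * c) ≤ 5 / 6 := by
      rw [div_le_iff₀ (by positivity)]
      linarith
    have h2 := Real.add_one_le_exp (-c ^ 2 / 2)
    have h3 : 1.25 * (3 / 4) ≤ δ := by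
      rw [hδe]
      gcongr
      linarith
    linarith

/-! ### The Gaussian mechanism -/

/-- The likelihood ratio of two Gaussians with the same variance, expanded around the mean `m` of the
first one. -/
theorem gaussianReal_eq_withDensity (m m' : ℝ) {V : NNReal} (hV : V ≠ 0) :
    gaussianReal m V = (gaussianReal m' V).withDensity (fun y =>
      ENNReal.ofReal (Real.exp (((m - m') * (y - m) / V + (m - m') ^ 2 / (2 * V))))) := by
  rw [gaussianReal_of_var_ne_zero _ hV, gaussianReal_of_var_ne_zero _ hV,
    ← withDensity_mul _ (by fun_prop) (by fun_prop)]
  congr 1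
  ext y
  have hV' : (V : ℝ) ≠ 0 := by exact_mod_cast hV
  rw [Pi.mul_apply, gaussianPDF, gaussianPDF, gaussianPDFReal, gaussianPDFReal,
    ← ENNReal.ofReal_mul (by positivity), mul_assoc (√_)⁻¹, ← Real.exp_add]
  congr 3
  field_simp
  ring

/-- A product of measures with densities has the product density. -/
theorem pi_withDensity {ι : Type*} [Fintype ι] (ν : ι → Measure ℝ)
    [∀ p, IsProbabilityMeasure (ν p)] (f : ι → ℝ → ENNReal) (hf : ∀ p, Measurable (f p))
    [∀ p, SigmaFinite ((ν p).withDensity (f p))] :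
    Measure.pi (fun p => (ν p).withDensity (f p)) =
      (Measure.pi ν).withDensity (fun y => ∏ p, f p (y p)) := by
  refine Measure.pi_eq fun s hs => ?_
  have hS : MeasurableSet (Set.univ.pi s) := MeasurableSet.univ_pi hs
  rw [withDensity_apply _ hS, ← lintegral_indicator hS]
  have hind : (Set.univ.pi s).indicator (fun y => ∏ p, f p (y p)) =
      fun y => ∏ p, (s p).indicator (f p) (y p) := by
    ext y
    by_cases hy : y ∈ Set.univ.pi s
    · rw [Set.indicator_of_mem hy]
      exact Finset.prod_congr rfl fun p _ => (Set.indicator_of_mem (hy p trivial) _).symm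
    · rw [Set.indicator_of_notMem hy]
      simp only [Set.mem_univ_pi, not_forall] at hy
      obtain ⟨p, hp⟩ := hy
      exact (Finset.prod_eq_zero (Finset.mem_univ p) (Set.indicator_of_notMem hp _)).symm
  have hm : ∀ p, Measurable ((s p).indicator (f p)) := fun p => (hf p).indicator (hs p)
  rw [hind, lintegral_prod_eq_prod_lintegral_of_indepFun Finset.univ
    (fun p (y : ι → ℝ) => (s p).indicator (f p) (y p))
    (iIndepFun_pi fun p => (hm p).aemeasurable) (fun p => (hm p).comp (measurable_pi_apply p))]
  refine Finset.prod_congr rfl fun p _ => ?_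
  rw [withDensity_apply _ (hs p), ← lintegral_indicator (hs p),
    ← (measurePreserving_eval ν p).lintegral_comp (hm p)]

/-- A linear form in independent centred Gaussians of variance `V` is Gaussian with variance
`‖v‖² V`. -/
theorem pi_gaussianReal_map_linear {ι : Type*} [Fintype ι] (m v : ι → ℝ) (V : NNReal) :
    (Measure.pi fun p => gaussianReal (m p) V).map (fun y => ∑ p, v p * (y p - m p)) =
      gaussianReal 0 (Real.toNNReal (∑ p, v p ^ 2) * V) := by
  have hm : ∀ p, Measurable fun y : ℝ => v p * (y - m p) := fun p => by fun_prop
  have hmap : ∀ p, (gaussianReal (m p) V).map (fun y : ℝ => v p * (y - m p)) =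
      gaussianReal 0 (Real.toNNReal (v p ^ 2) * V) := fun p => by
    have h : (fun y : ℝ => v p * (y - m p)) = (v p * ·) ∘ (fun y => y - m p) := rfl
    rw [h, ← Measure.map_map (by fun_prop) (by fun_prop), gaussianReal_map_sub_const,
      gaussianReal_map_const_mul, sub_self, mul_zero]
    congr 2
    ext
    simp [sq_nonneg]
  have hpi := Measure.pi_map_pi (μ := fun p => gaussianReal (m p) V)
    fun p => (hm p).aemeasurable
  simp only [hmap] at hpi
  have hsum : (fun y : ι → ℝ => ∑ p, v p * (y p - m p)) =
      (fun z : ι → ℝ => ∑ p, z p) ∘ fun y p => v p * (y p - m p) := rfl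
  rw [hsum, ← Measure.map_map (by fun_prop) (by fun_prop), hpi]
  refine Measure.ext_of_charFun ?_
  rw [charFun_map_sum_pi_eq_prod]
  ext t
  simp only [Finset.prod_apply, charFun_gaussianReal, ← Complex.exp_sum]
  congr 1
  have hnn : 0 ≤ ∑ p, v p ^ 2 := Finset.sum_nonneg fun p _ => sq_nonneg _
  simp only [NNReal.coe_mul, Real.coe_toNNReal _ hnn, Real.coe_toNNReal _ (sq_nonneg _)]
  push_cast
  simp [Finset.sum_mul, Finset.sum_div, Finset.sum_neg_distrib]

/-- Privacy of the Gaussian mechanism with squared `ℓ²`-sensitivity `S`: off the event `B` where the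
privacy loss exceeds `ε`, the densities differ by a factor at most `exp ε`, and `B` has probability
at most `δ`. -/
theorem gaussian_mechanism {ι : Type*} [Fintype ι] {ε δ S σ : ℝ} (hε : ε ∈ Set.Ioo (0 : ℝ) 1)
    (hδ : δ ∈ Set.Ioo (0 : ℝ) 1) (hS : 0 < S)
    (hσ : σ ^ 2 = S * (2 * Real.log (1.25 / δ)) / ε ^ 2)
    (m m' : ι → ℝ) (hsens : ∑ p, (m p - m' p) ^ 2 ≤ S) (Z : Set (ι → ℝ)) (hZ : MeasurableSet Z) :
    Measure.pi (fun p => gaussianReal (m p) (Real.toNNReal (σ ^ 2))) Z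
      ≤ ENNReal.ofReal (Real.exp ε) *
          Measure.pi (fun p => gaussianReal (m' p) (Real.toNNReal (σ ^ 2))) Z
        + ENNReal.ofReal δ := by
  obtain ⟨hε0, hε1⟩ := hε
  have hlog : 0 < Real.log (1.25 / δ) :=
    Real.log_pos ((one_lt_div hδ.1).2 (by linarith [hδ.2]))
  obtain ⟨c, hc, hcδ⟩ : ∃ c : ℝ, 0 < c ∧ c ^ 2 = 2 * Real.log (1.25 / δ) :=
    ⟨√(2 * Real.log (1.25 / δ)), by positivity, Real.sq_sqrt (by positivity)⟩
  rw [← hcδ] at hσ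
  have hσ0 : 0 < σ ^ 2 := by
    rw [hσ]
    positivity
  obtain ⟨V, hVσ⟩ : ∃ V : NNReal, V = Real.toNNReal (σ ^ 2) := ⟨_, rfl⟩
  have hVr : (V : ℝ) = S * c ^ 2 / ε ^ 2 := by
    rw [hVσ, Real.coe_toNNReal _ hσ0.le, hσ]
  have hVpos : 0 < (V : ℝ) := by
    rw [hVr]
    positivity
  have hV : V ≠ 0 := by exact_mod_cast hVpos.ne'
  rw [← hVσ]
  set Q : ℝ := ∑ p, (m p - m' p) ^ 2 with hQ
  have hQ0 : 0 ≤ Q := Finset.sum_nonneg fun p _ => sq_nonneg _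
  -- The privacy loss at `y` is `W y / V + Q / (2 V)`.
  set W : (ι → ℝ) → ℝ := fun y => ∑ p, (m p - m' p) * (y p - m p) with hW
  have hWm : Measurable W := by fun_prop
  have hdens : Measure.pi (fun p => gaussianReal (m p) V) =
      (Measure.pi fun p => gaussianReal (m' p) V).withDensity
        (fun y => ENNReal.ofReal (Real.exp (W y / V + Q / (2 * V)))) := by
    have hf : ∀ p, gaussianReal (m p) V = _ := fun p => gaussianReal_eq_withDensity (m p) (m' p) hV
    have : ∀ p, SigmaFinite ((gaussianReal (m' p) V).withDensity (fun y =>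
        ENNReal.ofReal
          (Real.exp (((m p - m' p) * (y - m p) / V + (m p - m' p) ^ 2 / (2 * V)))))) := fun p => by
      rw [← hf p]
      infer_instance
    simp only [hf]
    rw [pi_withDensity _ _ fun p => by fun_prop]
    congr 1
    ext y
    rw [← ENNReal.ofReal_prod_of_nonneg fun p _ => (Real.exp_pos _).le, ← Real.exp_sum,
      Finset.sum_add_distrib, ← Finset.sum_div, ← Finset.sum_div]
  set B : Set (ι → ℝ) := {y | ε < W y / V + Q / (2 * V)} with hB
  have hBm : MeasurableSet B := measurableSet_lt measurable_const (by fun_prop)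
  have hbad : Measure.pi (fun p => gaussianReal (m p) V) B ≤ ENNReal.ofReal δ := by
    rcases hQ0.eq_or_lt with hQz | hQpos
    · have hz : ∀ p, m p - m' p = 0 := fun p => by
        have := (Finset.sum_eq_zero_iff_of_nonneg fun p _ => sq_nonneg (m p - m' p)).1
          hQz.symm p (Finset.mem_univ p)
        exact pow_eq_zero_iff two_ne_zero |>.1 this
      have : B = ∅ := by
        ext y
        simp [hB, hW, hz, ← hQz, hε0.le]
      simp [this]
    · set r : ℝ := √(Q * V) with hr
      have hrpos : 0 < r := by positivity
      have hr2 : r ^ 2 = Q * V := Real.sq_sqrt (by positivity)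
      have hpre : B = W ⁻¹' Set.Ioi (ε * V - Q / 2) := by
        ext y
        have : W y / V + Q / (2 * V) = (W y + Q / 2) / V := by field_simp
        simp only [hB, Set.mem_ofPred_eq, Set.mem_preimage, Set.mem_Ioi, this, lt_div_iff₀ hVpos,
          sub_lt_iff_lt_add]
      have hstd : gaussianReal 0 (Real.toNNReal Q * V) = (gaussianReal 0 1).map (r * ·) := by
        rw [gaussianReal_map_const_mul, mul_zero]
        congr 1
        ext
        simp [hr2, hQ0]
      rw [hpre, ← Measure.map_apply hWm measurableSet_Ioi,
        pi_gaussianReal_map_linear m (fun p => m p - m' p) V, ← hQ, hstd,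
        Measure.map_apply (by fun_prop) measurableSet_Ioi]
      refine le_trans (measure_mono fun z hz => ?_) (gaussianReal_tail_le hδ hc hcδ)
      simp only [Set.mem_preimage, Set.mem_Ioi] at hz ⊢
      refine lt_of_le_of_lt ?_ ((div_lt_iff₀' hrpos).2 hz)
      -- Under the first measure, the privacy loss has mean `s² / 2` and standard deviation
      -- `s = √(Q / V) ≤ ε / c`; the threshold decreases in `s`.
      set s : ℝ := r / V with hs
      have hspos : 0 < s := by positivity
      have hQs : Q = s ^ 2 * V := by
        rw [hs, div_pow, hr2]
        field_simp
      have hrs : r = s * V := by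
        rw [hs]
        field_simp
      have hsc : s * c ≤ ε := by
        have h1 : s ^ 2 * (S * c ^ 2 / ε ^ 2) ≤ S := by rw [← hVr, ← hQs]; exact hsens
        have h2 : (s * c) ^ 2 ≤ ε ^ 2 := by
          have h3 : s ^ 2 * (S * c ^ 2 / ε ^ 2) = S * ((s * c) ^ 2 / ε ^ 2) := by ring
          rw [h3] at h1
          have h4 : (s * c) ^ 2 / ε ^ 2 ≤ 1 := by
            by_contra! h5
            nlinarith
          rwa [div_le_one (by positivity)] at h4
        exact (pow_le_pow_iff_left₀ (by positivity) hε0.le two_ne_zero).1 h2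
      have hexp : (ε * V - Q / 2) / r = ε / s - s / 2 := by
        rw [hQs, hrs]
        field_simp
      rw [hexp]
      have h1 : c ≤ ε / s := by rwa [le_div_iff₀' hspos]
      have h2 : s / 2 ≤ 1 / (2 * c) := by
        rw [div_le_div_iff₀ (by norm_num) (by positivity)]
        linarith
      linarith
  have hgood : Measure.pi (fun p => gaussianReal (m p) V) (Z \ B) ≤
      ENNReal.ofReal (Real.exp ε) * Measure.pi (fun p => gaussianReal (m' p) V) Z := by
    rw [hdens, withDensity_apply _ (hZ.diff hBm)]
    calc _ ≤ ∫⁻ _ in Z \ B, ENNReal.ofReal (Real.exp ε)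
            ∂(Measure.pi fun p => gaussianReal (m' p) V) := by
          refine setLIntegral_mono' (hZ.diff hBm) fun y hy => ENNReal.ofReal_le_ofReal ?_
          exact Real.exp_le_exp.2 (not_lt.1 hy.2)
      _ ≤ _ := by
          rw [setLIntegral_const]
          gcongr
          exact Set.sdiff_subset
  calc _ ≤ Measure.pi (fun p => gaussianReal (m p) V) (Z \ B ∪ B) := by
        refine measure_mono ?_
        rw [Set.sdiff_union_self]
        exact Set.subset_union_left
    _ ≤ _ := (measure_union_le _ _).trans (add_le_add hgood hbad)

/-! ### Sensitivity of the node counts -/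

/-- Time `t` lies in the `k`-th epoch of column `j`. -/
def InEpoch (w j k t : ℕ) : Prop :=
  (k - 1) * w + (j + 1) ≤ t ∧ t < k * w + (j + 1)

/-- Epochs with positive index are disjoint. -/
theorem InEpoch.unique {w j k k' t : ℕ} (hk : 1 ≤ k) (hk' : 1 ≤ k')
    (h : InEpoch w j k t) (h' : InEpoch w j k' t) : k = k' := by
  obtain ⟨h1, h2⟩ := h
  obtain ⟨h3, h4⟩ := h'
  rcases lt_trichotomy k k' with hlt | heq | hlt
  · have := Nat.mul_le_mul_right w (show k ≤ k' - 1 by omega)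
    omega
  · exact heq
  · have := Nat.mul_le_mul_right w (show k' ≤ k - 1 by omega)
    omega

open Classical in
/-- Only the arrival at time `l` contributes to the change of an epoch count. -/
theorem epochCount_sub {d w T : ℕ} {U : Type*} (h : Fin d → U → Fin w) {x x' : Fin T → U}
    {l : Fin T} (hxx' : ∀ t : Fin T, t ≠ l → x t = x' t) (i : Fin d) (j : Fin w) (k : ℕ) :
    (epochCount d w T h x i j k : ℝ) - epochCount d w T h x' i j k =
      (if InEpoch w j k l ∧ h i (x l) = j then 1 else 0) -
        (if InEpoch w j k l ∧ h i (x' l) = j then 1 else 0) := by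
  have key : ∀ y : Fin T → U, (epochCount d w T h y i j k : ℝ) =
      (if InEpoch w j k l ∧ h i (y l) = j then 1 else 0) +
        ∑ t ∈ Finset.univ.erase l, if InEpoch w j k t ∧ h i (y t) = j then 1 else 0 := fun y => by
    rw [Finset.add_sum_erase Finset.univ
      (fun t : Fin T => if InEpoch w j k t ∧ h i (y t) = j then (1 : ℝ) else 0) (Finset.mem_univ l),
      Finset.sum_boole, epochCount]
    simp only [InEpoch, and_assoc]
  rw [key x, key x', Finset.sum_congr rfl fun t ht => by rw [hxx' t (Finset.ne_of_mem_erase ht)]]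
  ring

/-- The tree node `p` counts an arrival of `u` at time `t`: `u` hashes to the cell of `p`, and the
epoch containing `t` lies in the dyadic interval of `p`. -/
def Touches {d w L K : ℕ} {U : Type*} (h : Fin d → U → Fin w) (u : U) (t : ℕ)
    (p : LazyNodeIndex d w L K) : Prop :=
  ∃ k, (k ∈ (Finset.Icc (((p.1.2.2.2 : ℕ)) * 2 ^ ((p.1.2.2.1 : ℕ)) + 1)
      ((((p.1.2.2.2 : ℕ)) + 1) * 2 ^ ((p.1.2.2.1 : ℕ)))).filter (· ≤ K)) ∧
    InEpoch w p.1.2.1 k t ∧ h p.1.1 u = p.1.2.1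

open Classical in
/-- An arrival is counted at most once by a node, since the epochs of a column are disjoint. -/
theorem sum_epoch_indicator {d w L K : ℕ} {U : Type*} (h : Fin d → U → Fin w) (u : U) (t : ℕ)
    (p : LazyNodeIndex d w L K) :
    (∑ k ∈ (Finset.Icc (((p.1.2.2.2 : ℕ)) * 2 ^ ((p.1.2.2.1 : ℕ)) + 1)
      ((((p.1.2.2.2 : ℕ)) + 1) * 2 ^ ((p.1.2.2.1 : ℕ)))).filter (· ≤ K),
        if InEpoch w p.1.2.1 k t ∧ h p.1.1 u = p.1.2.1 then (1 : ℝ) else 0) =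
      if Touches h u t p then 1 else 0 := by
  by_cases hT : Touches h u t p
  · rw [if_pos hT]
    obtain ⟨k, hk, hkt, hu⟩ := hT
    rw [Finset.sum_eq_single_of_mem k hk, if_pos ⟨hkt, hu⟩]
    intro k' hk' hne
    rw [if_neg]
    rintro ⟨hkt', -⟩
    simp only [Finset.mem_filter, Finset.mem_Icc] at hk hk'
    exact hne (hkt'.unique (by omega) (by omega) hkt)
  · rw [if_neg hT]
    refine Finset.sum_eq_zero fun k hk => if_neg fun hkt => hT ⟨k, hk, hkt⟩

open Classical in
/-- A single arrival is counted by at most one node per row and level: the hash fixes the column, the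
arrival time then fixes the epoch, and the dyadic intervals of a level are disjoint. -/
theorem card_touches_le {d w L K : ℕ} {U : Type*} (h : Fin d → U → Fin w) (u : U) (t : ℕ) :
    (Finset.univ.filter fun p : LazyNodeIndex d w L K => Touches h u t p).card ≤ d * (L + 1) := by
  have hcard : (Finset.univ : Finset (Fin d × Fin (L + 1))).card = d * (L + 1) := by simp
  rw [← hcard]
  refine Finset.card_le_card_of_injOn (fun p => (p.1.1, p.1.2.2.1)) (fun _ _ => Finset.mem_univ _) ?_
  rintro ⟨⟨i, j, lev, a⟩, hp⟩ h1 ⟨⟨i', j', lev', a'⟩, hp'⟩ h2 heq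
  simp only [Prod.mk.injEq] at heq
  obtain ⟨rfl, rfl⟩ := heq
  obtain ⟨k, hk, hkt, hj⟩ := (Finset.mem_filter.1 (Finset.mem_coe.1 h1)).2
  obtain ⟨k', hk', hkt', hj'⟩ := (Finset.mem_filter.1 (Finset.mem_coe.1 h2)).2
  obtain rfl : j = j' := hj.symm.trans hj'
  simp only [Finset.mem_filter, Finset.mem_Icc] at hk hk'
  obtain rfl := hkt'.unique (by omega) (by omega) hkt
  -- Both dyadic intervals `(a·2^lev, (a+1)·2^lev]` and `(a'·2^lev, (a'+1)·2^lev]` contain the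
  -- epoch `k'`.
  have h3 : (a : ℕ) < a' + 1 := lt_of_mul_lt_mul_right (a := 2 ^ (lev : ℕ)) (by omega) (by positivity)
  have h4 : (a' : ℕ) < a + 1 := lt_of_mul_lt_mul_right (a := 2 ^ (lev : ℕ)) (by omega) (by positivity)
  obtain rfl : a = a' := Fin.ext (by omega)
  rfl

/-- Squared `ℓ²`-sensitivity of the node counts. Each summand is `(a - a')² ≤ a + a'` with
`a, a' ∈ {0, 1}` marking the nodes that count the old and the new element. -/
theorem lazyNodeCount_sensitivity {d w T L K : ℕ} {U : Type*} (h : Fin d → U → Fin w)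
    {x x' : Fin T → U} {l : Fin T} (hxx' : ∀ t : Fin T, t ≠ l → x t = x' t) :
    ∑ p, (lazyNodeCount d w T L K h x p - lazyNodeCount d w T L K h x' p) ^ 2 ≤
      (L + 1) * (2 * d) := by
  classical
  have hdiff : ∀ p : LazyNodeIndex d w L K,
      lazyNodeCount d w T L K h x p - lazyNodeCount d w T L K h x' p =
        (if Touches h (x l) l p then 1 else 0) - if Touches h (x' l) l p then 1 else 0 := fun p => by
    rw [lazyNodeCount, lazyNodeCount, ← Finset.sum_sub_distrib, ← sum_epoch_indicator,
      ← sum_epoch_indicator, ← Finset.sum_sub_distrib]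
    exact Finset.sum_congr rfl fun k _ => epochCount_sub h hxx' _ _ k
  calc ∑ p, (lazyNodeCount d w T L K h x p - lazyNodeCount d w T L K h x' p) ^ 2
      ≤ ∑ p : LazyNodeIndex d w L K, ((if Touches h (x l) l p then (1 : ℝ) else 0) +
          if Touches h (x' l) l p then 1 else 0) := by
        refine Finset.sum_le_sum fun p _ => ?_
        rw [hdiff p]
        split_ifs <;> norm_num
    _ = ((Finset.univ.filter fun p : LazyNodeIndex d w L K => Touches h (x l) l p).card : ℝ) +
          (Finset.univ.filter fun p : LazyNodeIndex d w L K => Touches h (x' l) l p).card := by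
        rw [Finset.sum_add_distrib, Finset.sum_boole, Finset.sum_boole]
    _ ≤ ((d * (L + 1) : ℕ) : ℝ) + ((d * (L + 1) : ℕ) : ℝ) := by
        gcongr <;> exact card_touches_le h _ _
    _ = (L + 1) * (2 * d) := by
        push_cast
        ring

/-- Theorem 2 (privacy of the LazySketch): on streams differing in a single
element, releasing all binary-tree node counts of the lazily-updated output
counters, perturbed with independent Gaussian noise calibrated to sensitivity
`√(2d·(L+1))`, is `(ε, δ)`-differentially private. -/
theorem lazySketch_privacy
    (d w T : ℕ) (hd : 0 < d) (hw : 0 < w) (hT : 0 < T) (hwT : w ≤ T)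
    {U : Type*} (h : Fin d → U → Fin w)
    (ε δ : ℝ) (hε : ε ∈ Set.Ioo (0:ℝ) 1) (hδ : δ ∈ Set.Ioo (0:ℝ) 1)
    (K : ℕ) (hK : K = ⌈(T : ℝ) / w⌉₊)
    (L : ℕ) (hL : L = ⌈Real.logb 2 (K + 1)⌉₊)
    (σ : ℝ)
    (hσ : σ = (1 / ε) * Real.sqrt (2 * (L + 1) * (2 * d) * Real.log (1.25 / δ)))
    (x x' : Fin T → U) (l : Fin T)
    (hxx' : ∀ t : Fin T, t ≠ l → x t = x' t)
    (Z : Set (LazyNodeIndex d w L K → ℝ)) (hZ : MeasurableSet Z) :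
    Measure.pi (fun p => gaussianReal (lazyNodeCount d w T L K h x p)
        (Real.toNNReal (σ ^ 2))) Z
      ≤ ENNReal.ofReal (Real.exp ε) *
          Measure.pi (fun p => gaussianReal (lazyNodeCount d w T L K h x' p)
            (Real.toNNReal (σ ^ 2))) Z
        + ENNReal.ofReal δ := by
  have hL0 : (0 : ℝ) < L + 1 := by positivity
  have hd0 : (0 : ℝ) < d := by exact_mod_cast hd
  have hlog : 0 < Real.log (1.25 / δ) :=
    Real.log_pos ((one_lt_div hδ.1).2 (by linarith [hδ.2]))
  refine gaussian_mechanism (S := (L + 1) * (2 * d)) hε hδ (by positivity) ?_ _ _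
    (lazyNodeCount_sensitivity h hxx') Z hZ
  rw [hσ, mul_pow, Real.sq_sqrt (by positivity)]
  ring
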